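/- arXiv:1401.3088 — 2 statements merged into one kernel-verified Lean document; each statement's English description precedes it below -/
import Mathlib

section
/- Let K ≥ 1 and let M, C_1, …, C_K, Z_1, …, Z_K be finite discrete random variables, and write C = (C_1, …, C_K). Suppose that for each k ∈ {1, …, K}, the triple (Z_1, …, Z_{k−1}, C) → (C_k, M) → Z_k forms a Markov chain (i.e., Z_k is conditionally independent of (Z_1, …, Z_{k−1}, C) given (C_k, M)). Then the total information leakage satisfies I(M; Z_1, …, Z_K | C) ≤ Σ_{k=1}^K I(M; Z_k | C_k). -/
open scoped Classical

/-- Probability of an event under pmf `p` on a finite sample space. -/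
noncomputable def pr {Ω : Type*} [Fintype Ω] (p : Ω → ℝ) (E : Ω → Prop) : ℝ :=
  ∑ ω, if E ω then p ω else 0

/-- Shannon entropy of a finite discrete random variable `X`. -/
noncomputable def entropy {Ω α : Type*} [Fintype Ω] [Fintype α] (p : Ω → ℝ) (X : Ω → α) : ℝ :=
  -∑ x, pr p (fun ω => X ω = x) * Real.log (pr p (fun ω => X ω = x))

/-- Conditional entropy `H(X|Y) = H(X,Y) - H(Y)`. -/
noncomputable def condEntropy {Ω α β : Type*} [Fintype Ω] [Fintype α] [Fintype β]
    (p : Ω → ℝ) (X : Ω → α) (Y : Ω → β) : ℝ :=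
  entropy p (fun ω => (X ω, Y ω)) - entropy p Y

/-- Mutual information `I(X;Y) = H(X) + H(Y) - H(X,Y)`. -/
noncomputable def mutualInfo {Ω α β : Type*} [Fintype Ω] [Fintype α] [Fintype β]
    (p : Ω → ℝ) (X : Ω → α) (Y : Ω → β) : ℝ :=
  entropy p X + entropy p Y - entropy p (fun ω => (X ω, Y ω))

/-- Conditional mutual information `I(X;Y|Z) = H(X,Z) + H(Y,Z) - H(X,Y,Z) - H(Z)`. -/
noncomputable def condMutualInfo {Ω α β γ : Type*} [Fintype Ω] [Fintype α] [Fintype β] [Fintype γ]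
    (p : Ω → ℝ) (X : Ω → α) (Y : Ω → β) (Z : Ω → γ) : ℝ :=
  entropy p (fun ω => (X ω, Z ω)) + entropy p (fun ω => (Y ω, Z ω))
    - entropy p (fun ω => (X ω, Y ω, Z ω)) - entropy p Z

/-- `A → D → B` Markov chain: `A` and `B` are conditionally independent given `D`. -/
def CondIndep {Ω α β δ : Type*} [Fintype Ω]
    (p : Ω → ℝ) (A : Ω → α) (B : Ω → β) (D : Ω → δ) : Prop :=
  ∀ (a : α) (b : β) (d : δ),
    pr p (fun ω => A ω = a ∧ B ω = b ∧ D ω = d) * pr p (fun ω => D ω = d)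
      = pr p (fun ω => A ω = a ∧ D ω = d) * pr p (fun ω => B ω = b ∧ D ω = d)

theorem entropy_aux_sum {Ω α : Type*} [Fintype Ω] [Fintype α] (p : Ω → ℝ) (X : Ω → α) (g : α → ℝ) :
    ∑ x, pr p (fun ω => X ω = x) * g x = ∑ ω, p ω * g (X ω) := by
  simp only [pr, Finset.sum_mul]
  rw [Finset.sum_comm]
  refine Finset.sum_congr rfl fun ω _ => ?_
  rw [Finset.sum_eq_single (X ω)]
  · simp
  · intro b _ hb
    simp [Ne.symm hb]
  · simp

theorem entropy_eq_sum {Ω α : Type*} [Fintype Ω] [Fintype α] (p : Ω → ℝ) (X : Ω → α) :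
    entropy p X = -∑ ω, p ω * Real.log (pr p (fun ω' => X ω' = X ω)) := by
  unfold entropy
  rw [entropy_aux_sum p X (fun x => Real.log (pr p (fun ω => X ω = x)))]

theorem entropy_congr_ker {Ω α β : Type*} [Fintype Ω] [Fintype α] [Fintype β] (p : Ω → ℝ)
    (X : Ω → α) (Y : Ω → β) (h : ∀ ω ω', X ω = X ω' ↔ Y ω = Y ω') :
    entropy p X = entropy p Y := by
  rw [entropy_eq_sum, entropy_eq_sum]
  simp only [h]

theorem pr_nonneg' {Ω : Type*} [Fintype Ω] (p : Ω → ℝ) (hp : ∀ ω, 0 ≤ p ω) (E : Ω → Prop) :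
    0 ≤ pr p E := by
  unfold pr
  refine Finset.sum_nonneg fun ω _ => ?_
  split_ifs
  · exact hp ω
  · exact le_rfl

theorem pr_pos' {Ω : Type*} [Fintype Ω] (p : Ω → ℝ) (hp : ∀ ω, 0 ≤ p ω) (E : Ω → Prop) (ω : Ω)
    (h : 0 < p ω) (hE : E ω) : 0 < pr p E := by
  unfold pr
  refine Finset.sum_pos' (fun ω _ => ?_) ⟨ω, Finset.mem_univ _, ?_⟩
  · split_ifs
    · exact hp ω
    · exact le_rfl
  · simpa [hE] using h

theorem pr_marg {Ω α : Type*} [Fintype Ω] [Fintype α] (p : Ω → ℝ) (X : Ω → α) (E : Ω → Prop) :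
    ∑ x, pr p (fun ω => X ω = x ∧ E ω) = pr p E := by
  unfold pr
  rw [Finset.sum_comm]
  refine Finset.sum_congr rfl fun ω _ => ?_
  by_cases h : E ω <;> simp [h]

theorem pr_total {Ω α : Type*} [Fintype Ω] [Fintype α] (p : Ω → ℝ) (X : Ω → α) :
    ∑ x, pr p (fun ω => X ω = x) = ∑ ω, p ω := by
  have := entropy_aux_sum p X (fun _ => 1)
  simpa using this

theorem cmi_eq_sum {Ω α β δ : Type*} [Fintype Ω] [Fintype α] [Fintype β] [Fintype δ] (p : Ω → ℝ)
    (A : Ω → α) (B : Ω → β) (D : Ω → δ) :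
    condMutualInfo p A B D = ∑ ω, p ω *
      (Real.log (pr p (fun ω' => A ω' = A ω ∧ B ω' = B ω ∧ D ω' = D ω))
        + Real.log (pr p (fun ω' => D ω' = D ω))
        - Real.log (pr p (fun ω' => A ω' = A ω ∧ D ω' = D ω))
        - Real.log (pr p (fun ω' => B ω' = B ω ∧ D ω' = D ω))) := by
  unfold condMutualInfo
  simp only [entropy_eq_sum, Prod.mk.injEq, mul_add, mul_sub, Finset.sum_add_distrib,
    Finset.sum_sub_distrib]
  ring

theorem cmi_eq_zero {Ω α β δ : Type*} [Fintype Ω] [Fintype α] [Fintype β] [Fintype δ] (p : Ω → ℝ)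
    (hp : ∀ ω, 0 ≤ p ω)
    (A : Ω → α) (B : Ω → β) (D : Ω → δ) (h : CondIndep p A B D) :
    condMutualInfo p A B D = 0 := by
  rw [cmi_eq_sum]
  refine Finset.sum_eq_zero fun ω _ => ?_
  rcases (hp ω).eq_or_lt with h0 | h0
  · simp [← h0]
  · have e := congrArg Real.log (h (A ω) (B ω) (D ω))
    rw [Real.log_mul (pr_pos' p hp _ ω h0 (by simp)).ne' (pr_pos' p hp _ ω h0 (by simp)).ne',
      Real.log_mul (pr_pos' p hp _ ω h0 (by simp)).ne' (pr_pos' p hp _ ω h0 (by simp)).ne'] at e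
    rw [e]
    ring

theorem cmi_nonneg {Ω α β δ : Type*} [Fintype Ω] [Fintype α] [Fintype β] [Fintype δ] (p : Ω → ℝ)
    (hp : ∀ ω, 0 ≤ p ω) (A : Ω → α) (B : Ω → β) (D : Ω → δ) :
    0 ≤ condMutualInfo p A B D := by
  rw [cmi_eq_sum]
  set g : α × β × δ → ℝ := fun x =>
    pr p (fun ω' => A ω' = x.1 ∧ D ω' = x.2.2) * pr p (fun ω' => B ω' = x.2.1 ∧ D ω' = x.2.2) /
      (pr p (fun ω' => A ω' = x.1 ∧ B ω' = x.2.1 ∧ D ω' = x.2.2)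
        * pr p (fun ω' => D ω' = x.2.2)) with hg
  have h1 : ∑ ω, p ω * g (A ω, B ω, D ω) ≤ ∑ ω, p ω := by
    rw [← entropy_aux_sum p (fun ω => (A ω, B ω, D ω)) g, ← pr_total p D]
    have hle : ∀ x : α × β × δ, pr p (fun ω => (A ω, B ω, D ω) = x) * g x ≤
        pr p (fun ω' => A ω' = x.1 ∧ D ω' = x.2.2)
          * pr p (fun ω' => B ω' = x.2.1 ∧ D ω' = x.2.2) / pr p (fun ω' => D ω' = x.2.2) := by
      rintro ⟨a, b, d⟩
      simp only [hg, Prod.mk.injEq]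
      have n1 := pr_nonneg' p hp (fun ω' => A ω' = a ∧ D ω' = d)
      have n2 := pr_nonneg' p hp (fun ω' => B ω' = b ∧ D ω' = d)
      have n3 := pr_nonneg' p hp (fun ω' => D ω' = d)
      by_cases hz : pr p (fun ω' => A ω' = a ∧ B ω' = b ∧ D ω' = d) = 0
      · rw [hz, zero_mul]
        positivity
      · rw [← mul_div_assoc, mul_div_mul_left _ _ hz]
    refine (Finset.sum_le_sum fun x _ => hle x).trans ?_
    rw [Fintype.sum_prod_type]
    simp only [Fintype.sum_prod_type]
    rw [Finset.sum_congr rfl fun a _ => Finset.sum_comm, Finset.sum_comm]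
    refine Finset.sum_le_sum fun d _ => ?_
    simp only [← Finset.sum_div, ← Finset.mul_sum, ← Finset.sum_mul, pr_marg]
    rw [mul_self_div_self]
  have h2 : ∑ ω, p ω * (1 - g (A ω, B ω, D ω)) ≤ ∑ ω, p ω *
      (Real.log (pr p (fun ω' => A ω' = A ω ∧ B ω' = B ω ∧ D ω' = D ω))
        + Real.log (pr p (fun ω' => D ω' = D ω))
        - Real.log (pr p (fun ω' => A ω' = A ω ∧ D ω' = D ω))
        - Real.log (pr p (fun ω' => B ω' = B ω ∧ D ω' = D ω))) := by
    refine Finset.sum_le_sum fun ω _ => ?_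
    rcases (hp ω).eq_or_lt with h0 | h0
    · simp [← h0]
    · refine mul_le_mul_of_nonneg_left ?_ h0.le
      have q1 := pr_pos' p hp (fun ω' => A ω' = A ω ∧ B ω' = B ω ∧ D ω' = D ω) ω h0 (by simp)
      have q2 := pr_pos' p hp (fun ω' => D ω' = D ω) ω h0 (by simp)
      have q3 := pr_pos' p hp (fun ω' => A ω' = A ω ∧ D ω' = D ω) ω h0 (by simp)
      have q4 := pr_pos' p hp (fun ω' => B ω' = B ω ∧ D ω' = D ω) ω h0 (by simp)
      have hl := Real.log_le_sub_one_of_pos (div_pos (mul_pos q3 q4) (mul_pos q1 q2))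
      rw [Real.log_div (mul_pos q3 q4).ne' (mul_pos q1 q2).ne', Real.log_mul q3.ne' q4.ne',
        Real.log_mul q1.ne' q2.ne'] at hl
      simp only [hg]
      linarith
  simp only [mul_sub, mul_one, Finset.sum_sub_distrib] at h2
  simp only [mul_sub]  at h2 ⊢
  simp only [Finset.sum_sub_distrib] at h2 ⊢
  linarith

theorem leakage_aux
    {Ω 𝕄 γ ζ : Type*} [Fintype Ω] [Fintype 𝕄] [Fintype γ] [Fintype ζ]
    (p : Ω → ℝ) (hp : ∀ ω, 0 ≤ p ω) (K : ℕ)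
    (M : Ω → 𝕄) (C : Fin K → Ω → γ) (Z : Fin K → Ω → ζ)
    (hMarkov : ∀ k : Fin K,
      CondIndep p
        (fun ω => ((fun i : Fin (k : ℕ) => Z ⟨i, lt_trans i.isLt k.isLt⟩ ω),
                   (fun i : Fin K => C i ω)))
        (Z k)
        (fun ω => (C k ω, M ω))) (j : ℕ) (hj : j ≤ K) :
    condMutualInfo p M (fun ω => fun i : Fin j => Z (Fin.castLE hj i) ω)
        (fun ω => fun i : Fin K => C i ω)
      ≤ ∑ k : Fin j, condMutualInfo p M (Z (Fin.castLE hj k)) (C (Fin.castLE hj k)) := by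
  induction j with
  | zero =>
    unfold condMutualInfo
    rw [entropy_congr_ker p (fun ω => ((fun i : Fin 0 => Z (Fin.castLE hj i) ω),
        (fun i : Fin K => C i ω))) (fun ω => fun i : Fin K => C i ω)
        (by intro ω ω'; simp [funext_iff]),
      entropy_congr_ker p (fun ω => (M ω, (fun i : Fin 0 => Z (Fin.castLE hj i) ω),
        (fun i : Fin K => C i ω))) (fun ω => (M ω, fun i : Fin K => C i ω))
        (by intro ω ω'; simp [funext_iff])]
    simp
  | succ j ih =>
    have ih' := ih (Nat.le_of_succ_le hj)
    rw [Fin.sum_univ_castSucc]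
    set k : Fin K := ⟨j, hj⟩ with hk
    have hkl : Fin.castLE hj (Fin.last j) = k := rfl
    have hkc : ∀ i : Fin j, Fin.castLE hj (Fin.castSucc i) = Fin.castLE (Nat.le_of_succ_le hj) i :=
      fun i => rfl
    simp only [hkl, hkc]
    have m0 := cmi_eq_zero p hp _ _ _ (hMarkov k)
    have m1 := cmi_nonneg p hp (fun ω => ((fun i : Fin j => Z (Fin.castLE (Nat.le_of_succ_le hj) i) ω),
                   (fun i : Fin K => C i ω))) (Z k) (C k)
    change condMutualInfo p (fun ω => ((fun i : Fin j => Z (Fin.castLE (Nat.le_of_succ_le hj) i) ω),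
                   (fun i : Fin K => C i ω))) (Z k) (fun ω => (C k ω, M ω)) = 0 at m0
    have hF : ∀ ω ω', ((fun i : Fin (j+1) => Z (Fin.castLE hj i) ω) =
        (fun i : Fin (j+1) => Z (Fin.castLE hj i) ω')) ↔
        ((fun i : Fin j => Z (Fin.castLE (Nat.le_of_succ_le hj) i) ω) =
        (fun i : Fin j => Z (Fin.castLE (Nat.le_of_succ_le hj) i) ω')) ∧ Z k ω = Z k ω' := by
      intro ω ω'
      simp only [funext_iff]
      rw [Fin.forall_fin_succ']
      simp only [hkl, hkc]
    have hC : ∀ ω ω', ((fun i : Fin K => C i ω) = (fun i : Fin K => C i ω')) → C k ω = C k ω' :=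
      fun ω ω' h => congrFun h k
    unfold condMutualInfo at *
    generalize (∑ i : Fin j, _ : ℝ) = S at *
    generalize hFF : (fun (ω : Ω) (i : Fin j) => Z (Fin.castLE (Nat.le_of_succ_le hj) i) ω) = F at *
    generalize hGG : (fun (ω : Ω) (i : Fin (j+1)) => Z (Fin.castLE hj i) ω) = G at *
    generalize hCC : (fun (ω : Ω) (i : Fin K) => C i ω) = T at *
    have f1 : ∀ ω, (fun i : Fin j => Z (Fin.castLE (Nat.le_of_succ_le hj) i) ω) = F ω :=
      fun ω => congrFun hFF ω
    have f2 : ∀ ω, (fun i : Fin (j+1) => Z (Fin.castLE hj i) ω) = G ω :=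
      fun ω => congrFun hGG ω
    have f3 : ∀ ω, (fun i : Fin K => C i ω) = T ω := fun ω => congrFun hCC ω
    simp only [f1, f2, f3] at *
    clear hFF hGG hCC f1 f2 f3 ih hMarkov
    have e1 := entropy_congr_ker p (fun ω => ((F ω, T ω), C k ω, M ω)) (fun ω => (M ω, F ω, T ω))
      (by intro ω ω'; have := hC ω ω'; simp only [Prod.mk.injEq]; tauto)
    have e2 := entropy_congr_ker p (fun ω => ((F ω, T ω), Z k ω, C k ω, M ω))
      (fun ω => (M ω, G ω, T ω))
      (by intro ω ω'; have := hC ω ω'; simp only [Prod.mk.injEq, hF]; tauto)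
    have e3 := entropy_congr_ker p (fun ω => (Z k ω, C k ω, M ω)) (fun ω => (M ω, Z k ω, C k ω))
      (by intro ω ω'; simp only [Prod.mk.injEq]; tauto)
    have e4 := entropy_congr_ker p (fun ω => (C k ω, M ω)) (fun ω => (M ω, C k ω))
      (by intro ω ω'; simp only [Prod.mk.injEq]; tauto)
    have e5 := entropy_congr_ker p (fun ω => ((F ω, T ω), C k ω)) (fun ω => (F ω, T ω))
      (by intro ω ω'; have := hC ω ω'; simp only [Prod.mk.injEq]; tauto)
    have e6 := entropy_congr_ker p (fun ω => ((F ω, T ω), Z k ω, C k ω)) (fun ω => (G ω, T ω))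
      (by intro ω ω'; have := hC ω ω'; simp only [Prod.mk.injEq, hF]; tauto)
    rw [e1, e2, e3, e4] at m0
    rw [e5, e6] at m1
    linarith

/-- Lemma 2 of the paper: if for each frame `k` the triple
`(Z₁,…,Z_{k-1}, C) → (C_k, M) → Z_k` is a Markov chain, then the total leakage
`I(M; Z₁,…,Z_K | C)` is at most the sum of the per-frame leakages `I(M; Z_k | C_k)`. -/
theorem leakage_subadditive
    {Ω 𝕄 γ ζ : Type*} [Fintype Ω] [Fintype 𝕄] [Fintype γ] [Fintype ζ]
    (p : Ω → ℝ) (hp : ∀ ω, 0 ≤ p ω) (hp1 : ∑ ω, p ω = 1)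
    (K : ℕ) (hK : 1 ≤ K)
    (M : Ω → 𝕄) (C : Fin K → Ω → γ) (Z : Fin K → Ω → ζ)
    (hMarkov : ∀ k : Fin K,
      CondIndep p
        (fun ω => ((fun i : Fin (k : ℕ) => Z ⟨i, lt_trans i.isLt k.isLt⟩ ω),
                   (fun i : Fin K => C i ω)))
        (Z k)
        (fun ω => (C k ω, M ω))) :
    condMutualInfo p M (fun ω => fun i : Fin K => Z i ω) (fun ω => fun i : Fin K => C i ω)
      ≤ ∑ k : Fin K, condMutualInfo p M (Z k) (C k) := by
  exact leakage_aux p hp K M C Z hMarkov K le_rfl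
end

section
/- Let K ≥ 2, let R_s > 0 and R_{d,1}, …, R_{d,K} ≥ 0. Define the S-HARQ decoding region A = { x ∈ ℝ^K : x_k ≥ 0 for all k, and Σ_{k=1}^K max(x_k − R_{d,k}, 0) ≥ R_s } and the IR-HARQ decoding region B = { x ∈ ℝ^K : x_k ≥ 0 for all k, and Σ_{k=1}^K x_k ≥ R_s + Σ_{k=1}^K R_{d,k} }. Then B ⊆ A; moreover, if R_{d,j} > 0 for some j, the inclusion is strict, i.e., there exists x ∈ A with x ∉ B. -/
/-- the IR-HARQ decoding region `B` is contained in the S-HARQ decoding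
region `A`, and the inclusion is strict as soon as some randomization rate `R_{d,j}` is
positive. -/
theorem sharq_decoding_region_strictly_larger
    (K : ℕ) (hK : 2 ≤ K) (Rs : ℝ) (hRs : 0 < Rs)
    (Rd : Fin K → ℝ) (hRd : ∀ k, 0 ≤ Rd k) :
    ({x : Fin K → ℝ | (∀ k, 0 ≤ x k) ∧ Rs + ∑ k, Rd k ≤ ∑ k, x k}
      ⊆ {x : Fin K → ℝ | (∀ k, 0 ≤ x k) ∧ Rs ≤ ∑ k, max (x k - Rd k) 0})
    ∧ ((∃ j, 0 < Rd j) →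
        ∃ x : Fin K → ℝ,
          x ∈ {x : Fin K → ℝ | (∀ k, 0 ≤ x k) ∧ Rs ≤ ∑ k, max (x k - Rd k) 0} ∧
          x ∉ {x : Fin K → ℝ | (∀ k, 0 ≤ x k) ∧ Rs + ∑ k, Rd k ≤ ∑ k, x k}) := by
  constructor
  · rintro x ⟨hx, hs⟩
    refine ⟨hx, ?_⟩
    have h : ∑ k, (x k - Rd k) ≤ ∑ k, max (x k - Rd k) 0 :=
      Finset.sum_le_sum fun k _ => le_max_left _ _
    rw [Finset.sum_sub_distrib] at h
    linarith
  · rintro ⟨j, hj⟩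
    haveI : Nontrivial (Fin K) := Fin.nontrivial_iff_two_le.mpr hK
    obtain ⟨i, hij⟩ := exists_ne j
    refine ⟨Pi.single i (Rs + Rd i), ⟨?_, ?_⟩, ?_⟩
    · intro k
      by_cases hk : k = i
      · subst hk
        simp only [Pi.single_eq_same]
        linarith [hRd k]
      · simp [Pi.single_eq_of_ne hk]
    · have h := Finset.single_le_sum
        (f := fun k => max ((Pi.single i (Rs + Rd i) : Fin K → ℝ) k - Rd k) 0)
        (fun k _ => le_max_right _ _) (Finset.mem_univ i)
      simp only [Pi.single_eq_same, add_sub_cancel_right] at h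
      exact le_trans (le_max_left _ _) h
    · rintro ⟨-, h⟩
      have h1 : ∑ k, (Pi.single i (Rs + Rd i) : Fin K → ℝ) k = Rs + Rd i := by
        simp
      rw [h1] at h
      have h2 : ∑ k ∈ {i, j}, Rd k ≤ ∑ k, Rd k :=
        Finset.sum_le_sum_of_subset_of_nonneg (Finset.subset_univ _) fun k _ _ => hRd k
      rw [Finset.sum_pair hij] at h2
      linarith
end
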